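/- (Kolmogorov moment bound for the Donsker line, heavy-tail case α > 1/2.) Let φ : ℕ → ℝ with φ_i ≥ 0, φ_0 = 0, ∑_{i=1}^∞ φ_i = 1, and assume there exist K > 0 and α ∈ (1/2, 1) such that N^α ∑_{i=N}^∞ φ_i → K as N → ∞. Set δ = K Γ(1−α)/α, and let (a_n)_{n≥1} satisfy 0 < a_n < 1 and n^α(1−a_n) → λδ for some λ > 0. Let (ε_k)_{k≥0} be iid real random variables with E[ε_0] = 0 and E[ε_0²] = 1, define y^n_0 = ε_0, y^n_k = ε_k + ∑_{i=1}^k a_n φ_i y^n_{k−i} for k ≥ 1, and set Z^n_t = ((1−a_n)/√n)(∑_{j=0}^{⌊nt⌋} y^n_j + (nt−⌊nt⌋) y^n_{⌊nt⌋+1}) for t ∈ [0,1]. Then there exists c > 0 such that for every n ≥ 1 and all s, t ∈ [0,1], E[|Z^n_t − Z^n_s|²] ≤ c |t−s|². -/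

import Mathlib

open MeasureTheory ProbabilityTheory Filter Set

/-- Convolution powers of a sequence. -/
noncomputable def convPow (φ : ℕ → ℝ) : ℕ → ℕ → ℝ
  | 0 => fun i => if i = 0 then 1 else 0
  | (l + 1) => fun k => ∑ j ∈ Finset.range (k + 1), convPow φ l j * φ (k - j)

/-- ψ^a_i = ∑_{l=0}^∞ a^l (φ^{*l})_i. -/
noncomputable def psiSeq (a : ℝ) (φ : ℕ → ℝ) (i : ℕ) : ℝ :=
  ∑' l : ℕ, a ^ l * convPow φ l i

/-- Fourier transform of a sequence indexed by ℕ. -/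
noncomputable def fourierSeq (f : ℕ → ℝ) (z : ℝ) : ℂ :=
  ∑' k : ℕ, (f k : ℂ) * Complex.exp (-(2 * Real.pi * Complex.I * k * z))

/-- Mittag-Leffler function E_{α,α}. -/
noncomputable def mittagLeffler (α u : ℝ) : ℝ :=
  ∑' k : ℕ, u ^ k / Real.Gamma (α * k + α)

/-- f^{α,λ}. -/
noncomputable def mlDensity (α lam s : ℝ) : ℝ :=
  lam * s ^ (α - 1) * mittagLeffler α (-lam * s ^ α)

/-- F^{α,λ}. -/
noncomputable def mlCDF (α lam x : ℝ) : ℝ :=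
  ∫ s in (0:ℝ)..x, mlDensity α lam s

/-!
Solving the recursion gives `y_k = ∑ ψ_{k-j} ε_j` with `ψ = psiSeq a φ`, so that
`E y_k² = ∑_{j ≤ k} ψ_j²`, and by Cauchy–Schwarz an increment of the line is controlled by
`sup_k E y_k²`. Everything rests on the bound `∑ ψ_j² ≤ C (1 - a)^(1/α - 2)`, uniform in `a`.

Write `ψ̂` and `φ̂` for the Fourier transforms. On the one hand `|ψ̂| ≤ ∑ ψ_j ≤ 1 / (1 - a)`. On the
other hand `ψ̂ (1 - a φ̂) = 1`, and a tail of order `N^(-α)` forces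
`∑ φ_k (1 - cos (2 * π * k * z)) ≥ c z^α` near `0`, so that `|ψ̂(z)| ≤ C z^(-α)` there. Since
`ψ ≥ 0`, testing against a triangle function bounds `∑ ψ_j²` by the integral of `|ψ̂|²` over an
arbitrarily small interval `[0, h]`, so no aperiodicity of `φ` is needed to control `φ̂` away from
`0`. Using the first bound below `η = h (1 - a)^(1/α)`, and above `η` the second, whose square has
integral `O(η^(1 - 2α))` as `α > 1/2`, gives the claim.
-/

open Asymptotics Topology

/-- A subprobability mass function on `ℕ`, as a sequence of reals: the kernels, critical
or subcritical, of the autoregressions below. -/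
structure IsSubprobSeq (φ : ℕ → ℝ) : Prop where
  nonneg : ∀ i, 0 ≤ φ i
  summable : Summable φ
  tsum_le_one : ∑' i, φ i ≤ 1

section Renewal

variable {φ : ℕ → ℝ} {a : ℝ}

lemma convPow_nonneg (hφ : ∀ i, 0 ≤ φ i) (l k : ℕ) : 0 ≤ convPow φ l k := by
  induction l generalizing k with
  | zero => simp only [convPow]; split_ifs <;> norm_num
  | succ l ih => exact Finset.sum_nonneg fun j _ => mul_nonneg (ih j) (hφ _)

lemma convPow_le_one (hφ : IsSubprobSeq φ) (l k : ℕ) : convPow φ l k ≤ 1 := by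
  induction l generalizing k with
  | zero => simp only [convPow]; split_ifs <;> norm_num
  | succ l ih =>
    calc ∑ j ∈ Finset.range (k + 1), convPow φ l j * φ (k - j)
        ≤ ∑ j ∈ Finset.range (k + 1), φ (k - j) :=
          Finset.sum_le_sum fun j _ => mul_le_of_le_one_left (hφ.nonneg _) (ih j)
      _ = ∑ j ∈ Finset.range (k + 1), φ j := Finset.sum_range_reflect φ (k + 1)
      _ ≤ ∑' j, φ j := hφ.summable.sum_le_tsum _ fun j _ => hφ.nonneg j
      _ ≤ 1 := hφ.tsum_le_one

lemma psiSeq_nonneg (ha : 0 ≤ a) (hφ : ∀ i, 0 ≤ φ i) (k : ℕ) : 0 ≤ psiSeq a φ k :=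
  tsum_nonneg fun l => mul_nonneg (pow_nonneg ha l) (convPow_nonneg hφ l k)

lemma summable_pow_mul_convPow (ha0 : 0 ≤ a) (ha1 : a < 1) (hφ : IsSubprobSeq φ) (k : ℕ) :
    Summable fun l => a ^ l * convPow φ l k :=
  (summable_geometric_of_lt_one ha0 ha1).of_nonneg_of_le
    (fun l => mul_nonneg (pow_nonneg ha0 l) (convPow_nonneg hφ.nonneg l k))
    fun l => mul_le_of_le_one_right (pow_nonneg ha0 l) (convPow_le_one hφ l k)

lemma psiSeq_renewal_equation (ha0 : 0 ≤ a) (ha1 : a < 1) (hφ : IsSubprobSeq φ) (k : ℕ) :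
    psiSeq a φ k =
      (if k = 0 then 1 else 0) + a * ∑ j ∈ Finset.range (k + 1), psiSeq a φ j * φ (k - j) := by
  have hterm (l : ℕ) : a ^ (l + 1) * convPow φ (l + 1) k =
      a * ∑ j ∈ Finset.range (k + 1), a ^ l * convPow φ l j * φ (k - j) := by
    simp only [convPow, Finset.mul_sum]
    exact Finset.sum_congr rfl fun j _ => by ring
  have hsum := summable_pow_mul_convPow ha0 ha1 hφ
  rw [psiSeq, (hsum k).tsum_eq_zero_add]
  simp_rw [hterm, tsum_mul_left]
  rw [Summable.tsum_finsetSum fun j _ => (hsum j).mul_right _]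
  simp_rw [tsum_mul_right, psiSeq]
  simp [convPow]

/-- Sum the renewal equation over `k < N`: the partial sum `S` satisfies `S ≤ 1 + a * S`. -/
lemma sum_psiSeq_le (ha0 : 0 ≤ a) (ha1 : a < 1) (hφ : IsSubprobSeq φ) (N : ℕ) :
    ∑ k ∈ Finset.range N, psiSeq a φ k ≤ 1 / (1 - a) := by
  have hψ := psiSeq_nonneg ha0 hφ.nonneg
  have hconv : ∑ k ∈ Finset.range N, ∑ j ∈ Finset.range (k + 1), psiSeq a φ j * φ (k - j) ≤
      ∑ k ∈ Finset.range N, psiSeq a φ k := by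
    rw [Finset.sum_range_diag_flip N fun j i => psiSeq a φ j * φ i]
    refine Finset.sum_le_sum fun j _ => ?_
    rw [← Finset.mul_sum]
    exact mul_le_of_le_one_right (hψ j)
      ((hφ.summable.sum_le_tsum _ fun i _ => hφ.nonneg i).trans hφ.tsum_le_one)
  have hdelta : ∑ k ∈ Finset.range N, (if k = 0 then (1 : ℝ) else 0) ≤ 1 := by
    rw [Finset.sum_ite_eq']
    split_ifs <;> norm_num
  have hrec : ∑ k ∈ Finset.range N, psiSeq a φ k =
      ∑ k ∈ Finset.range N, (if k = 0 then (1 : ℝ) else 0) +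
        a * ∑ k ∈ Finset.range N, ∑ j ∈ Finset.range (k + 1), psiSeq a φ j * φ (k - j) := by
    rw [Finset.mul_sum, ← Finset.sum_add_distrib]
    exact Finset.sum_congr rfl fun k _ => psiSeq_renewal_equation ha0 ha1 hφ k
  rw [le_div_iff₀ (sub_pos.2 ha1)]
  linarith [mul_le_mul_of_nonneg_left hconv ha0]

lemma summable_psiSeq (ha0 : 0 ≤ a) (ha1 : a < 1) (hφ : IsSubprobSeq φ) :
    Summable (psiSeq a φ) :=
  summable_of_sum_range_le (psiSeq_nonneg ha0 hφ.nonneg) (sum_psiSeq_le ha0 ha1 hφ)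

lemma tsum_psiSeq_le (ha0 : 0 ≤ a) (ha1 : a < 1) (hφ : IsSubprobSeq φ) :
    ∑' k, psiSeq a φ k ≤ 1 / (1 - a) :=
  Real.tsum_le_of_sum_range_le (psiSeq_nonneg ha0 hφ.nonneg) (sum_psiSeq_le ha0 ha1 hφ)

/-- In generating functions, `(1 - a φ) y = e` and `ψ (1 - a φ) = 1`. -/
lemma eq_sum_psiSeq_mul_of_autoregression (ha0 : 0 ≤ a) (ha1 : a < 1) (hφ : IsSubprobSeq φ)
    (hφ0 : φ 0 = 0) {e y : ℕ → ℝ} (hy0 : y 0 = e 0)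
    (hyrec : ∀ k, 1 ≤ k → y k = e k + ∑ i ∈ Finset.Icc 1 k, a * φ i * y (k - i)) (k : ℕ) :
    y k = ∑ j ∈ Finset.range (k + 1), psiSeq a φ (k - j) * e j := by
  have hψ : PowerSeries.mk (psiSeq a φ) =
      1 + PowerSeries.C a * (PowerSeries.mk (psiSeq a φ) * PowerSeries.mk φ) := by
    ext m
    rw [map_add, PowerSeries.coeff_one, PowerSeries.coeff_C_mul, PowerSeries.coeff_mul,
      Finset.Nat.sum_antidiagonal_eq_sum_range_succ_mk]
    simpa only [PowerSeries.coeff_mk] using psiSeq_renewal_equation ha0 ha1 hφ m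
  have hy : PowerSeries.mk y =
      PowerSeries.mk e + PowerSeries.C a * (PowerSeries.mk φ * PowerSeries.mk y) := by
    ext m
    rw [map_add, PowerSeries.coeff_C_mul, PowerSeries.coeff_mul,
      Finset.Nat.sum_antidiagonal_eq_sum_range_succ_mk]
    simp only [PowerSeries.coeff_mk]
    rcases Nat.eq_zero_or_pos m with rfl | hm
    · simp [hφ0, hy0]
    · rw [hyrec m hm, Finset.sum_range_succ', hφ0, zero_mul, add_zero,
        ← Finset.Ico_add_one_right_eq_Icc, Finset.sum_Ico_eq_sum_range, Finset.mul_sum]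
      simp [add_comm, mul_assoc]
  have hye : PowerSeries.mk y = PowerSeries.mk e * PowerSeries.mk (psiSeq a φ) := by
    linear_combination PowerSeries.mk (psiSeq a φ) * hy - PowerSeries.mk y * hψ
  have hcoeff := congrArg (PowerSeries.coeff k) hye
  rw [PowerSeries.coeff_mul, Finset.Nat.sum_antidiagonal_eq_sum_range_succ_mk] at hcoeff
  simp only [PowerSeries.coeff_mk] at hcoeff
  rw [hcoeff]
  exact Finset.sum_congr rfl fun j _ => mul_comm _ _

end Renewal

section Fourier

variable {f g : ℕ → ℝ}

lemma exp_fourier_kernel (k : ℕ) (z : ℝ) :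
    Complex.exp (-(2 * Real.pi * Complex.I * k * z)) =
      Complex.exp ((-(2 * Real.pi * k) * z : ℝ) * Complex.I) := by
  congr 1
  push_cast
  ring

lemma norm_fourierSeq_term (f : ℕ → ℝ) (z : ℝ) (k : ℕ) :
    ‖(f k : ℂ) * Complex.exp (-(2 * Real.pi * Complex.I * k * z))‖ = ‖f k‖ := by
  rw [norm_mul, exp_fourier_kernel, Complex.norm_exp_ofReal_mul_I, mul_one, Complex.norm_real]

lemma summable_norm_fourierSeq_term (hf : Summable f) (z : ℝ) :
    Summable fun k : ℕ => ‖(f k : ℂ) * Complex.exp (-(2 * Real.pi * Complex.I * k * z))‖ := by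
  simpa only [norm_fourierSeq_term] using hf.norm

lemma summable_mul_cos (hf : Summable f) (θ : ℕ → ℝ) : Summable fun k => f k * Real.cos (θ k) :=
  hf.norm.of_norm_bounded fun k => by
    rw [norm_mul]
    exact mul_le_of_le_one_right (norm_nonneg _) (Real.abs_cos_le_one _)

lemma fourierSeq_re (hf : Summable f) (z : ℝ) :
    (fourierSeq f z).re = ∑' k : ℕ, f k * Real.cos (2 * Real.pi * k * z) := by
  rw [fourierSeq, Complex.re_tsum (summable_norm_fourierSeq_term hf z).of_norm]
  refine tsum_congr fun k => ?_
  rw [Complex.re_ofReal_mul, exp_fourier_kernel, Complex.exp_ofReal_mul_I_re, neg_mul,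
    Real.cos_neg]

lemma norm_fourierSeq_le (hf : Summable f) (z : ℝ) : ‖fourierSeq f z‖ ≤ ∑' k, ‖f k‖ := by
  simp_rw [← norm_fourierSeq_term f z]
  exact norm_tsum_le_tsum_norm (summable_norm_fourierSeq_term hf z)

lemma continuous_fourierSeq (hf : Summable f) : Continuous (fourierSeq f) :=
  continuous_tsum (fun k => by fun_prop) hf.norm fun k z => (norm_fourierSeq_term f z k).le

lemma fourierSeq_mul_fourierSeq (hf : Summable f) (hg : Summable g) (z : ℝ) :
    fourierSeq f z * fourierSeq g z =
      fourierSeq (fun k => ∑ j ∈ Finset.range (k + 1), f j * g (k - j)) z := by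
  rw [fourierSeq, fourierSeq, tsum_mul_tsum_eq_tsum_sum_range_of_summable_norm
    (summable_norm_fourierSeq_term hf z) (summable_norm_fourierSeq_term hg z)]
  refine tsum_congr fun k => ?_
  push_cast
  rw [Finset.sum_mul]
  refine Finset.sum_congr rfl fun j hj => ?_
  rw [mul_mul_mul_comm, ← Complex.exp_add, Nat.cast_sub (Finset.mem_range_succ_iff.1 hj)]
  ring_nf

lemma fourierSeq_psiSeq_mul {φ : ℕ → ℝ} {a : ℝ} (ha0 : 0 ≤ a) (ha1 : a < 1)
    (hφ : IsSubprobSeq φ) (z : ℝ) :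
    fourierSeq (psiSeq a φ) z * (1 - a * fourierSeq φ z) = 1 := by
  have hψ := summable_psiSeq ha0 ha1 hφ
  have hrenewal (k : ℕ) :
      (a : ℂ) * (((∑ j ∈ Finset.range (k + 1), psiSeq a φ j * φ (k - j) : ℝ) : ℂ) *
        Complex.exp (-(2 * Real.pi * Complex.I * k * z))) =
      psiSeq a φ k * Complex.exp (-(2 * Real.pi * Complex.I * k * z)) -
        if k = 0 then 1 else 0 := by
    rw [psiSeq_renewal_equation ha0 ha1 hφ k]
    split_ifs with hk
    · subst hk
      simp
    · push_cast
      ring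
  rw [mul_sub, mul_one, mul_left_comm, fourierSeq_mul_fourierSeq hψ hφ.summable]
  simp only [fourierSeq]
  rw [← tsum_mul_left, tsum_congr hrenewal,
    (summable_norm_fourierSeq_term hψ z).of_norm.tsum_sub (hasSum_ite_eq 0 1).summable,
    tsum_ite_eq, sub_sub_cancel]

/-- The real part of `1 - a * fourierSeq φ z` is affine in `a`, and at both ends of `[0, 1]` it is
at least half the sum on the right. -/
lemma norm_fourierSeq_psiSeq_mul_le {φ : ℕ → ℝ} {a : ℝ} (ha0 : 0 ≤ a) (ha1 : a < 1)
    (hφ : IsSubprobSeq φ) (z : ℝ) :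
    ‖fourierSeq (psiSeq a φ) z‖ * ∑' k : ℕ, φ k * (1 - Real.cos (2 * Real.pi * k * z)) ≤ 2 := by
  set S := ∑' k : ℕ, φ k * (1 - Real.cos (2 * Real.pi * k * z))
  have hS : S = ∑' k, φ k - (fourierSeq φ z).re := by
    simp only [S, mul_sub, mul_one]
    rw [hφ.summable.tsum_sub (summable_mul_cos hφ.summable _), fourierSeq_re hφ.summable]
  have hre : |(fourierSeq φ z).re| ≤ ∑' k, φ k := by
    refine (Complex.abs_re_le_norm _).trans ((norm_fourierSeq_le hφ.summable z).trans_eq ?_)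
    simp only [Real.norm_of_nonneg (hφ.nonneg _)]
  have hle : S / 2 ≤ ‖1 - a * fourierSeq φ z‖ := by
    refine le_trans ?_ (Complex.re_le_norm _)
    rw [Complex.sub_re, Complex.one_re, Complex.re_ofReal_mul]
    obtain ⟨hlow, hup⟩ := abs_le.1 hre
    have hmass := hφ.tsum_le_one
    have hzero : 0 ≤ (1 - a) * (1 - S / 2) := mul_nonneg (by linarith) (by linarith)
    have hone : 0 ≤ a * (S / 2 + (1 - ∑' k, φ k)) := mul_nonneg ha0 (by linarith)
    linear_combination hzero + hone + a * hS
  have hnorm := congrArg norm (fourierSeq_psiSeq_mul ha0 ha1 hφ z)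
  rw [norm_mul, norm_one] at hnorm
  linarith [mul_le_mul_of_nonneg_left hle (norm_nonneg (fourierSeq (psiSeq a φ) z))]

end Fourier

section LocalParseval

lemma integral_triangle {h : ℝ} (hh : 0 < h) : ∫ z in (0 : ℝ)..h, (1 - z / h) = h / 2 := by
  rw [intervalIntegral.integral_sub intervalIntegrable_const
    (Continuous.intervalIntegrable (by fun_prop) _ _), intervalIntegral.integral_div, integral_id,
    intervalIntegral.integral_const, smul_eq_mul]
  field_simp
  ring

lemma integral_triangle_mul_cos_nonneg {h : ℝ} (hh : 0 < h) (m : ℝ) :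
    0 ≤ ∫ z in (0 : ℝ)..h, (1 - z / h) * Real.cos (m * z) := by
  rcases eq_or_ne m 0 with rfl | hm
  · simp only [zero_mul, Real.cos_zero, mul_one, integral_triangle hh]
    positivity
  have hderiv (z : ℝ) : HasDerivAt
      (fun z => (1 - z / h) * (Real.sin (m * z) / m) - Real.cos (m * z) / (m ^ 2 * h))
      ((1 - z / h) * Real.cos (m * z)) z := by
    have hlin : HasDerivAt (fun z : ℝ => m * z) m z := by
      simpa using (hasDerivAt_id z).const_mul m
    have htri : HasDerivAt (fun z : ℝ => 1 - z / h) (-(1 / h)) z := by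
      simpa using ((hasDerivAt_id z).div_const h).const_sub 1
    refine ((htri.mul (hlin.sin.div_const m)).sub
      (hlin.cos.div_const (m ^ 2 * h))).congr_deriv ?_
    field_simp
    ring
  have heval : ∫ z in (0 : ℝ)..h, (1 - z / h) * Real.cos (m * z) =
      (1 - Real.cos (m * h)) / (m ^ 2 * h) := by
    rw [intervalIntegral.integral_eq_sub_of_hasDerivAt (fun z _ => hderiv z)
      (Continuous.intervalIntegrable (by fun_prop) _ _), div_self hh.ne', mul_zero, Real.sin_zero,
      Real.cos_zero]
    ring
  rw [heval]
  exact div_nonneg (sub_nonneg.2 (Real.cos_le_one _)) (by positivity)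

lemma norm_sq_sum_mul_exp {ι : Type*} (s : Finset ι) (u ξ : ι → ℝ) (z : ℝ) :
    ‖∑ j ∈ s, (u j : ℂ) * Complex.exp ((ξ j * z : ℝ) * Complex.I)‖ ^ 2 =
      ∑ j ∈ s, ∑ k ∈ s, u j * u k * Real.cos ((ξ j - ξ k) * z) := by
  simp only [← Complex.normSq_eq_norm_sq, Complex.normSq_apply, Complex.re_sum, Complex.im_sum,
    Finset.sum_mul_sum, ← Finset.sum_add_distrib, Complex.re_ofReal_mul, Complex.im_ofReal_mul,
    Complex.exp_ofReal_mul_I_re, Complex.exp_ofReal_mul_I_im, sub_mul, Real.cos_sub]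
  exact Finset.sum_congr rfl fun j _ => Finset.sum_congr rfl fun k _ => by ring

/-- Insert the triangle weight `1 - z / h ≤ 1`: its cosine transform is nonnegative, so after
expanding the square the off-diagonal terms can be dropped. -/
lemma sum_sq_le_integral_norm_sq_sum_mul_exp {ι : Type*} (s : Finset ι) {u : ι → ℝ}
    (hu : ∀ j, 0 ≤ u j) (ξ : ι → ℝ) {h : ℝ} (hh : 0 < h) :
    h / 2 * ∑ j ∈ s, u j ^ 2 ≤
      ∫ z in (0 : ℝ)..h, ‖∑ j ∈ s, (u j : ℂ) * Complex.exp ((ξ j * z : ℝ) * Complex.I)‖ ^ 2 := by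
  set F : ℝ → ℝ := fun z => ‖∑ j ∈ s, (u j : ℂ) * Complex.exp ((ξ j * z : ℝ) * Complex.I)‖ ^ 2
    with hF
  set w : ι → ι → ℝ := fun j k => ∫ z in (0 : ℝ)..h, (1 - z / h) * Real.cos ((ξ j - ξ k) * z)
  have hdiag (j : ι) : w j j = h / 2 := by
    simp only [w, sub_self, zero_mul, Real.cos_zero, mul_one, integral_triangle hh]
  have hFc : Continuous F := by
    rw [hF]
    fun_prop
  calc h / 2 * ∑ j ∈ s, u j ^ 2
      = ∑ j ∈ s, u j * u j * w j j := by
        rw [Finset.mul_sum]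
        exact Finset.sum_congr rfl fun j _ => by rw [hdiag]; ring
    _ ≤ ∑ j ∈ s, ∑ k ∈ s, u j * u k * w j k :=
        Finset.sum_le_sum fun j hj => Finset.single_le_sum (f := fun k => u j * u k * w j k)
          (fun k _ => mul_nonneg (mul_nonneg (hu j) (hu k))
            (integral_triangle_mul_cos_nonneg hh _)) hj
    _ = ∫ z in (0 : ℝ)..h, (1 - z / h) * F z := by
        simp_rw [F, norm_sq_sum_mul_exp, Finset.mul_sum, mul_left_comm (1 - _ / h)]
        rw [intervalIntegral.integral_finsetSum fun j _ =>
          Continuous.intervalIntegrable (by fun_prop) _ _]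
        refine Finset.sum_congr rfl fun j _ => ?_
        rw [intervalIntegral.integral_finsetSum fun k _ =>
          Continuous.intervalIntegrable (by fun_prop) _ _]
        simp_rw [intervalIntegral.integral_const_mul, w]
    _ ≤ ∫ z in (0 : ℝ)..h, F z := by
        refine intervalIntegral.integral_mono_on hh.le
          (Continuous.intervalIntegrable (by fun_prop) _ _) (hFc.intervalIntegrable _ _)
          fun z hz => mul_le_of_le_one_left (sq_nonneg _) ?_
        linarith [div_nonneg hz.1 hh.le]

lemma sum_sq_le_integral_norm_sq_fourierSeq {u : ℕ → ℝ} (hu : ∀ k, 0 ≤ u k) (hs : Summable u)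
    {h : ℝ} (hh : 0 < h) (N : ℕ) :
    h / 2 * ∑ k ∈ Finset.range N, u k ^ 2 ≤ ∫ z in (0 : ℝ)..h, ‖fourierSeq u z‖ ^ 2 := by
  set F : ℕ → ℝ → ℂ := fun M z => ∑ k ∈ Finset.range M,
    (u k : ℂ) * Complex.exp ((-(2 * Real.pi * k) * z : ℝ) * Complex.I) with hF
  have hFbound (M : ℕ) (z : ℝ) : ‖F M z‖ ≤ ∑' k, u k := by
    refine (norm_sum_le _ _).trans
      (le_trans (Finset.sum_le_sum fun k _ => ?_) (hs.sum_le_tsum _ fun k _ => hu k))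
    rw [norm_mul, Complex.norm_exp_ofReal_mul_I, mul_one, Complex.norm_of_nonneg (hu k)]
  have hFlim (z : ℝ) : Tendsto (fun M => F M z) atTop (𝓝 (fourierSeq u z)) := by
    simp only [hF, ← exp_fourier_kernel]
    exact (summable_norm_fourierSeq_term hs z).of_norm.hasSum.tendsto_sum_nat
  have hlim : Tendsto (fun M => ∫ z in (0 : ℝ)..h, ‖F M z‖ ^ 2) atTop
      (𝓝 (∫ z in (0 : ℝ)..h, ‖fourierSeq u z‖ ^ 2)) := by
    refine intervalIntegral.tendsto_integral_filter_of_dominated_convergence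
      (fun _ => (∑' k, u k) ^ 2) (.of_forall fun M => ?_) (.of_forall fun M => ?_)
      intervalIntegrable_const (.of_forall fun z _ => (hFlim z).norm.pow 2)
    · exact Continuous.aestronglyMeasurable (by fun_prop)
    · refine .of_forall fun z _ => ?_
      rw [Real.norm_of_nonneg (sq_nonneg _)]
      exact pow_le_pow_left₀ (norm_nonneg _) (hFbound M z) 2
  refine ge_of_tendsto hlim ((eventually_ge_atTop N).mono fun M hM => ?_)
  calc h / 2 * ∑ k ∈ Finset.range N, u k ^ 2
      ≤ h / 2 * ∑ k ∈ Finset.range M, u k ^ 2 := by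
        gcongr
    _ ≤ ∫ z in (0 : ℝ)..h, ‖F M z‖ ^ 2 := sum_sq_le_integral_norm_sq_sum_mul_exp _ hu _ hh

lemma integral_rpow_neg_two_mul_le {α η h : ℝ} (hα : 1 / 2 < α) (hη : 0 < η) (hηh : η ≤ h) :
    ∫ z in η..h, z ^ (-2 * α) ≤ η ^ (1 - 2 * α) / (2 * α - 1) := by
  have hnotMem : (0 : ℝ) ∉ uIcc η h := by
    rw [uIcc_of_le hηh]
    exact fun h0 => hη.not_ge h0.1
  rw [integral_rpow (Or.inr ⟨by linarith, hnotMem⟩), ← neg_div_neg_eq,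
    show -2 * α + 1 = 1 - 2 * α by ring, neg_sub, neg_sub]
  have := Real.rpow_nonneg (hη.le.trans hηh) (1 - 2 * α)
  have : 0 < 2 * α - 1 := by linarith
  gcongr
  linarith

lemma sum_sq_le_of_norm_fourierSeq_le {u : ℕ → ℝ} (hu : ∀ k, 0 ≤ u k) (hs : Summable u)
    {α C S η h : ℝ} (hα : 1 / 2 < α) (hη : 0 < η) (hηh : η ≤ h) (hS : ∑' k, u k ≤ S)
    (hC : ∀ z, η ≤ z → z ≤ h → ‖fourierSeq u z‖ ≤ C * z ^ (-α)) (N : ℕ) :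
    ∑ k ∈ Finset.range N, u k ^ 2 ≤
      2 / h * (η * S ^ 2 + C ^ 2 * (η ^ (1 - 2 * α) / (2 * α - 1))) := by
  have hh : 0 < h := hη.trans_le hηh
  have hcont : Continuous fun z => ‖fourierSeq u z‖ ^ 2 := (continuous_fourierSeq hs).norm.pow 2
  have hlow : ∫ z in (0 : ℝ)..η, ‖fourierSeq u z‖ ^ 2 ≤ η * S ^ 2 := by
    have hbound (z : ℝ) : ‖fourierSeq u z‖ ≤ S :=
      (norm_fourierSeq_le hs z).trans (by simpa only [Real.norm_of_nonneg (hu _)] using hS)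
    have := intervalIntegral.integral_mono_on hη.le (hcont.intervalIntegrable 0 η)
      (intervalIntegrable_const (μ := volume) (c := S ^ 2))
      fun z _ => pow_le_pow_left₀ (norm_nonneg _) (hbound z) 2
    simpa using this
  have hhigh : ∫ z in η..h, ‖fourierSeq u z‖ ^ 2 ≤
      C ^ 2 * (η ^ (1 - 2 * α) / (2 * α - 1)) := by
    have hint : IntervalIntegrable (fun z : ℝ => z ^ (-2 * α)) volume η h :=
      intervalIntegral.intervalIntegrable_rpow (Or.inr (by
        rw [uIcc_of_le hηh]
        exact fun h0 => hη.not_ge h0.1))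
    calc ∫ z in η..h, ‖fourierSeq u z‖ ^ 2
        ≤ ∫ z in η..h, C ^ 2 * z ^ (-2 * α) := by
          refine intervalIntegral.integral_mono_on hηh (hcont.intervalIntegrable η h)
            (hint.const_mul _) fun z hz => ?_
          refine (pow_le_pow_left₀ (norm_nonneg _) (hC z hz.1 hz.2) 2).trans_eq ?_
          rw [mul_pow, ← Real.rpow_mul_natCast (hη.le.trans hz.1)]
          ring_nf
      _ = C ^ 2 * ∫ z in η..h, z ^ (-2 * α) := intervalIntegral.integral_const_mul _ _
      _ ≤ _ := by
          gcongr
          exact integral_rpow_neg_two_mul_le hα hη hηh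
  have hparseval := sum_sq_le_integral_norm_sq_fourierSeq hu hs hh N
  rw [← intervalIntegral.integral_add_adjacent_intervals (hcont.intervalIntegrable 0 η)
    (hcont.intervalIntegrable η h)] at hparseval
  rw [← div_le_iff₀' (by positivity), div_div_eq_mul_div]
  linarith

end LocalParseval

section HeavyTail

variable {φ : ℕ → ℝ} {α : ℝ}

lemma exists_eventually_le_sum_Ico_of_isTheta_tail (hφ : ∀ i, 0 ≤ φ i) (hs : Summable φ)
    (hα : 0 < α)
    (htail : (fun N : ℕ => ∑' i, φ (N + i)) =Θ[atTop] fun N : ℕ => (N : ℝ) ^ (-α)) :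
    ∃ q : ℕ, 0 < q ∧ ∃ c > 0, ∀ᶠ N : ℕ in atTop,
      c * (N : ℝ) ^ (-α) ≤ ∑ k ∈ Finset.Ico N (q * N), φ k := by
  obtain ⟨M, -, hM⟩ := htail.1.exists_pos
  obtain ⟨m, hm, hmle⟩ := htail.2.exists_pos
  have hnonneg (N : ℕ) : 0 ≤ ∑' i, φ (N + i) := tsum_nonneg fun _ => hφ _
  have hqlim : Tendsto (fun q : ℕ => M * (q : ℝ) ^ (-α)) atTop (𝓝 0) := by
    simpa using ((tendsto_rpow_neg_atTop hα).comp tendsto_natCast_atTop_atTop).const_mul M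
  obtain ⟨q, hq, hq0⟩ := ((hqlim.eventually_lt_const (show 0 < (2 * m)⁻¹ by positivity)).and
    (eventually_gt_atTop 0)).exists
  refine ⟨q, hq0, (2 * m)⁻¹, by positivity, ?_⟩
  filter_upwards [hmle.bound, (tendsto_id.const_mul_atTop' hq0).eventually hM.bound]
    with N hlow hup
  simp only [id_eq, Real.norm_of_nonneg (hnonneg _), Nat.cast_mul, norm_mul,
    Real.norm_of_nonneg (Real.rpow_nonneg (Nat.cast_nonneg _) _),
    Real.mul_rpow (Nat.cast_nonneg q) (Nat.cast_nonneg N)] at hlow hup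
  have hsplit : ∑ k ∈ Finset.Ico N (q * N), φ k = ∑' i, φ (N + i) - ∑' i, φ (q * N + i) := by
    have h1 := hs.sum_add_tsum_nat_add N
    have h2 := hs.sum_add_tsum_nat_add (q * N)
    rw [Finset.sum_Ico_eq_sub _ (Nat.le_mul_of_pos_left N hq0)]
    simp_rw [add_comm N, add_comm (q * N)]
    linarith
  have hlow' : m⁻¹ * (N : ℝ) ^ (-α) ≤ ∑' i, φ (N + i) := by
    rwa [inv_mul_le_iff₀ hm]
  have hup' : ∑' i, φ (q * N + i) ≤ (2 * m)⁻¹ * (N : ℝ) ^ (-α) := by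
    rw [← mul_assoc] at hup
    exact hup.trans (by gcongr)
  have hhalf : m⁻¹ * (N : ℝ) ^ (-α) = 2 * ((2 * m)⁻¹ * (N : ℝ) ^ (-α)) := by
    rw [mul_inv]
    ring
  linarith

lemma tsum_mul_one_sub_cos_nonneg (hφ : ∀ i, 0 ≤ φ i) (z : ℝ) :
    0 ≤ ∑' k : ℕ, φ k * (1 - Real.cos (2 * Real.pi * k * z)) :=
  tsum_nonneg fun k => mul_nonneg (hφ k) (sub_nonneg.2 (Real.cos_le_one _))

/-- On the block `N ≤ k < q * N` the phase `2 * π * k * z` stays in `[0, π]` and away from `0`, so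
that `1 - cos` is bounded below there. -/
lemma mul_sum_Ico_le_tsum_mul_one_sub_cos (hφ : ∀ i, 0 ≤ φ i) (hs : Summable φ) {q N : ℕ} {z : ℝ}
    (hz : 0 < z) (hle : 2 * q * N * z ≤ 1) (hge : 1 ≤ 4 * q * N * z) :
    1 / (2 * q ^ 2) * ∑ k ∈ Finset.Ico N (q * N), φ k ≤
      ∑' k : ℕ, φ k * (1 - Real.cos (2 * Real.pi * k * z)) := by
  have hq : (0 : ℝ) < q := Nat.cast_pos.2 <| Nat.pos_of_ne_zero fun h0 => by
    norm_num [h0] at hge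
  have hcos : ∀ k ∈ Finset.Ico N (q * N),
      1 / (2 * q ^ 2) ≤ 1 - Real.cos (2 * Real.pi * k * z) := by
    intro k hk
    obtain ⟨hNk, hkN⟩ := Finset.mem_Ico.1 hk
    have hNk' : (N : ℝ) ≤ k := Nat.cast_le.2 hNk
    have hkN' : (k : ℝ) ≤ q * N := by exact_mod_cast hkN.le
    have hupper : k * z ≤ 1 / 2 := by
      linarith [mul_le_mul_of_nonneg_right hkN' hz.le]
    have hlower : 1 / (4 * q) ≤ k * z := by
      rw [div_le_iff₀ (by positivity)]
      linarith [mul_le_mul_of_nonneg_right hNk' (show 0 ≤ z * (4 * q) by positivity)]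
    have hphase : |2 * Real.pi * k * z| ≤ Real.pi := by
      rw [abs_of_nonneg (by positivity)]
      linarith [mul_le_mul_of_nonneg_left hupper Real.pi_pos.le]
    calc 1 / (2 * (q : ℝ) ^ 2) = 8 * (1 / (4 * q)) ^ 2 := by ring
      _ ≤ 8 * (k * z) ^ 2 := by gcongr
      _ = 2 / Real.pi ^ 2 * (2 * Real.pi * k * z) ^ 2 := by field_simp; ring
      _ ≤ 1 - Real.cos (2 * Real.pi * k * z) := by
        linarith [Real.cos_le_one_sub_mul_cos_sq hphase]
  have hsummable : Summable fun k : ℕ => φ k * (1 - Real.cos (2 * Real.pi * k * z)) := by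
    simpa only [mul_sub, mul_one] using hs.sub (summable_mul_cos hs _)
  rw [mul_comm, Finset.sum_mul]
  exact (Finset.sum_le_sum fun k hk => mul_le_mul_of_nonneg_left (hcos k hk) (hφ k)).trans
    (hsummable.sum_le_tsum _ fun k _ => mul_nonneg (hφ k) (sub_nonneg.2 (Real.cos_le_one _)))

lemma isBigO_rpow_tsum_mul_one_sub_cos (hφ : ∀ i, 0 ≤ φ i) (hs : Summable φ) (hα : 0 < α)
    (htail : (fun N : ℕ => ∑' i, φ (N + i)) =Θ[atTop] fun N : ℕ => (N : ℝ) ^ (-α)) :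
    (fun z : ℝ => z ^ α) =O[𝓝[>] 0]
      fun z => ∑' k : ℕ, φ k * (1 - Real.cos (2 * Real.pi * k * z)) := by
  obtain ⟨q, hq0, c, hc, hblock⟩ :=
    exists_eventually_le_sum_Ico_of_isTheta_tail hφ hs hα htail
  have hq : (1 : ℝ) ≤ q := Nat.one_le_cast.2 hq0
  set N : ℝ → ℕ := fun z => ⌊(2 * q * z)⁻¹⌋₊
  have hN : Tendsto N (𝓝[>] 0) atTop := by
    refine tendsto_nat_floor_atTop.comp ?_
    simp only [mul_inv]
    exact tendsto_inv_nhdsGT_zero.const_mul_atTop (by positivity)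
  refine IsBigO.of_bound (1 / (2 * q ^ 2) * c)⁻¹ ?_
  filter_upwards [hN.eventually hblock, hN.eventually_ge_atTop 1, self_mem_nhdsWithin]
    with z hblockz hN1 (hz : 0 < z)
  have hN1' : (1 : ℝ) ≤ N z := Nat.one_le_cast.2 hN1
  have hw : 0 < 2 * q * z := by positivity
  have hNle : N z * (2 * q * z) ≤ 1 :=
    (le_div_iff₀ hw).1 ((Nat.floor_le (by positivity)).trans_eq (one_div _).symm)
  have hltN : 1 < (N z + 1) * (2 * q * z) :=
    (div_lt_iff₀ hw).1 ((one_div _).trans_lt (Nat.lt_floor_add_one _))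
  have hcutoff : z ^ α ≤ (N z : ℝ) ^ (-α) := by
    rw [Real.rpow_neg (Nat.cast_nonneg _), ← Real.inv_rpow (Nat.cast_nonneg _)]
    refine Real.rpow_le_rpow hz.le ?_ hα.le
    rw [← one_div, le_div_iff₀' (by positivity)]
    refine le_trans ?_ hNle
    gcongr
    exact le_mul_of_one_le_left hz.le (by linarith)
  rw [Real.norm_of_nonneg (by positivity), Real.norm_of_nonneg (tsum_mul_one_sub_cos_nonneg hφ z),
    ← div_eq_inv_mul, le_div_iff₀' (by positivity)]
  calc 1 / (2 * q ^ 2) * c * z ^ α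
      ≤ 1 / (2 * q ^ 2) * (c * (N z : ℝ) ^ (-α)) := by
        rw [mul_assoc]
        gcongr
    _ ≤ 1 / (2 * q ^ 2) * ∑ k ∈ Finset.Ico (N z) (q * N z), φ k := by gcongr
    _ ≤ _ := mul_sum_Ico_le_tsum_mul_one_sub_cos hφ hs hz (by linarith)
        (by linarith [mul_le_mul_of_nonneg_right hN1' hw.le])

lemma exists_norm_fourierSeq_psiSeq_le_rpow_neg (hφ : IsSubprobSeq φ) (hα : 0 < α)
    (htail : (fun N : ℕ => ∑' i, φ (N + i)) =Θ[atTop] fun N : ℕ => (N : ℝ) ^ (-α)) :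
    ∃ h > 0, ∃ C > 0, ∀ a, 0 ≤ a → a < 1 → ∀ z, 0 < z → z ≤ h →
      ‖fourierSeq (psiSeq a φ) z‖ ≤ C * z ^ (-α) := by
  obtain ⟨B, hB, hBO⟩ :=
    (isBigO_rpow_tsum_mul_one_sub_cos hφ.nonneg hφ.summable hα htail).exists_pos
  obtain ⟨h, hh, hsub⟩ := mem_nhdsGT_iff_exists_Ioc_subset.1 hBO.bound
  refine ⟨h, hh, 2 * B, by positivity, fun a ha0 ha1 z hz hzh => ?_⟩
  have hzB := hsub ⟨hz, hzh⟩
  rw [mem_ofPred_eq, Real.norm_of_nonneg (by positivity),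
    Real.norm_of_nonneg (tsum_mul_one_sub_cos_nonneg hφ.nonneg z)] at hzB
  rw [Real.rpow_neg hz.le, ← div_eq_mul_inv, le_div_iff₀ (by positivity)]
  calc ‖fourierSeq (psiSeq a φ) z‖ * z ^ α
      ≤ ‖fourierSeq (psiSeq a φ) z‖ *
          (B * ∑' k : ℕ, φ k * (1 - Real.cos (2 * Real.pi * k * z))) := by gcongr
    _ ≤ 2 * B := by
      rw [mul_left_comm, mul_comm 2 B]
      exact mul_le_mul_of_nonneg_left (norm_fourierSeq_psiSeq_mul_le ha0 ha1 hφ z) hB.le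

lemma exists_sum_psiSeq_sq_le (hφ : IsSubprobSeq φ) (hα : 1 / 2 < α)
    (htail : (fun N : ℕ => ∑' i, φ (N + i)) =Θ[atTop] fun N : ℕ => (N : ℝ) ^ (-α)) :
    ∃ C > 0, ∀ a, 0 ≤ a → a < 1 → ∀ N,
      ∑ k ∈ Finset.range N, psiSeq a φ k ^ 2 ≤ C * (1 - a) ^ (1 / α - 2) := by
  have hα0 : 0 < α := by linarith
  have hα1 : 0 < 2 * α - 1 := by linarith
  obtain ⟨h, hh, B, hB, hdecay⟩ := exists_norm_fourierSeq_psiSeq_le_rpow_neg hφ hα0 htail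
  refine ⟨2 / h * (h + B ^ 2 * (h ^ (1 - 2 * α) / (2 * α - 1))), by positivity,
    fun a ha0 ha1 N => ?_⟩
  have hb : 0 < 1 - a := sub_pos.2 ha1
  have hη : 0 < h * (1 - a) ^ (1 / α) := by positivity
  have hηh : h * (1 - a) ^ (1 / α) ≤ h :=
    mul_le_of_le_one_right hh.le (Real.rpow_le_one hb.le (by linarith) (by positivity))
  refine (sum_sq_le_of_norm_fourierSeq_le (psiSeq_nonneg ha0 hφ.nonneg) (summable_psiSeq ha0 ha1 hφ)
    hα hη hηh (tsum_psiSeq_le ha0 ha1 hφ)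
    (fun z hz hzh => hdecay a ha0 ha1 z (hη.trans_le hz) hzh) N).trans_eq ?_
  have hlow : (1 - a) ^ (1 / α) * (1 / (1 - a)) ^ 2 = (1 - a) ^ (1 / α - 2) := by
    rw [Real.rpow_sub hb, Real.rpow_two, one_div_pow, mul_one_div]
  have hhigh : (h * (1 - a) ^ (1 / α)) ^ (1 - 2 * α) =
      h ^ (1 - 2 * α) * (1 - a) ^ (1 / α - 2) := by
    rw [Real.mul_rpow hh.le (by positivity), ← Real.rpow_mul hb.le]
    congr 2
    field_simp
  rw [hhigh, mul_assoc h, hlow]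
  ring

end HeavyTail

section SecondMoment

variable {Ω ι : Type*} [MeasurableSpace Ω] {P : Measure Ω}

lemma integral_sq_sum_mul_of_orthonormal [DecidableEq ι] {ε : ι → Ω → ℝ}
    (hL2 : ∀ j, MemLp (ε j) 2 P)
    (hε : ∀ j k, ∫ ω, ε j ω * ε k ω ∂P = if j = k then 1 else 0) (s : Finset ι) (w : ι → ℝ) :
    ∫ ω, (∑ j ∈ s, w j * ε j ω) ^ 2 ∂P = ∑ j ∈ s, w j ^ 2 := by
  have hint (j k : ι) : Integrable (fun ω => w j * w k * (ε j ω * ε k ω)) P :=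
    ((hL2 j).integrable_mul (hL2 k)).const_mul _
  have hexpand (ω : Ω) : (∑ j ∈ s, w j * ε j ω) ^ 2 =
      ∑ j ∈ s, ∑ k ∈ s, w j * w k * (ε j ω * ε k ω) := by
    simp only [sq, Finset.sum_mul_sum, mul_mul_mul_comm]
  simp_rw [hexpand]
  rw [integral_finsetSum _ fun j _ => integrable_finsetSum _ fun k _ => hint j k]
  refine Finset.sum_congr rfl fun j hj => ?_
  rw [integral_finsetSum _ fun k _ => hint j k]
  simp_rw [integral_const_mul, hε, mul_ite, mul_one, mul_zero]
  rw [Finset.sum_ite_eq, if_pos hj, sq]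

lemma integral_sq_sum_mul_le {y : ι → Ω → ℝ} {B : ℝ} (hL2 : ∀ j, MemLp (y j) 2 P)
    (hB : ∀ j, ∫ ω, y j ω ^ 2 ∂P ≤ B) (s : Finset ι) {w : ι → ℝ} (hw : ∀ j, 0 ≤ w j) :
    ∫ ω, (∑ j ∈ s, w j * y j ω) ^ 2 ∂P ≤ (∑ j ∈ s, w j) ^ 2 * B := by
  have hint (j : ι) : Integrable (fun ω => w j * y j ω ^ 2) P :=
    ((hL2 j).integrable_sq).const_mul _
  calc ∫ ω, (∑ j ∈ s, w j * y j ω) ^ 2 ∂P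
      ≤ ∫ ω, (∑ j ∈ s, w j) * ∑ j ∈ s, w j * y j ω ^ 2 ∂P :=
        integral_mono_of_nonneg (.of_forall fun ω => sq_nonneg _)
          ((integrable_finsetSum _ fun j _ => hint j).const_mul _)
          (.of_forall fun ω => Finset.sum_sq_le_sum_mul_sum_of_sq_le_mul s (fun j _ => hw j)
            (fun j _ => mul_nonneg (hw j) (sq_nonneg _)) fun j _ => le_of_eq (by ring))
    _ = (∑ j ∈ s, w j) * ∑ j ∈ s, w j * ∫ ω, y j ω ^ 2 ∂P := by
        rw [integral_const_mul, integral_finsetSum _ fun j _ => hint j]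
        simp_rw [integral_const_mul]
    _ ≤ (∑ j ∈ s, w j) * ∑ j ∈ s, w j * B := by
        have := Finset.sum_nonneg fun j (_ : j ∈ s) => hw j
        gcongr with j _
        · exact hw j
        · exact hB j
    _ = (∑ j ∈ s, w j) ^ 2 * B := by rw [← Finset.sum_mul]; ring

end SecondMoment

section PartialSumLine

/-- The linear interpolation of the partial sums of `y`, with value `∑ j ≤ m, y j` at `m : ℕ`. -/
noncomputable def partialSumLine (y : ℕ → ℝ) (x : ℝ) : ℝ :=
  ∑ j ∈ Finset.range (⌊x⌋₊ + 1), y j + (x - ⌊x⌋₊) * y (⌊x⌋₊ + 1)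

/-- The coefficient of `y j` in `partialSumLine y x`, as a function of `x`: it rises linearly
from `0` to `1` on `[j - 1, j]` and is constant outside. -/
noncomputable def partialSumLineWeight (x : ℝ) (j : ℕ) : ℝ :=
  min 1 (max 0 (x + 1 - j))

lemma partialSumLineWeight_mono (j : ℕ) : Monotone fun x => partialSumLineWeight x j := by
  intro x z hxz
  simp only [partialSumLineWeight]
  gcongr

lemma partialSumLine_eq_sum_weight_mul (y : ℕ → ℝ) {x : ℝ} (hx : 0 ≤ x) {N : ℕ}
    (hN : ⌊x⌋₊ + 2 ≤ N) :
    partialSumLine y x = ∑ j ∈ Finset.range N, partialSumLineWeight x j * y j := by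
  have hfloor := Nat.floor_le hx
  have hlt := Nat.lt_floor_add_one x
  have hone (j : ℕ) (hj : j ∈ Finset.range (⌊x⌋₊ + 1)) : partialSumLineWeight x j = 1 := by
    have : (j : ℝ) ≤ ⌊x⌋₊ := Nat.cast_le.2 (Finset.mem_range_succ_iff.1 hj)
    rw [partialSumLineWeight, max_eq_right (by linarith), min_eq_left (by linarith)]
  have hfract : partialSumLineWeight x (⌊x⌋₊ + 1) = x - ⌊x⌋₊ := by
    rw [partialSumLineWeight, Nat.cast_add_one, max_eq_right (by linarith),
      min_eq_right (by linarith)]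
    ring
  have hzero (j : ℕ) (hj : j ∉ Finset.range (⌊x⌋₊ + 2)) : partialSumLineWeight x j = 0 := by
    have : (⌊x⌋₊ : ℝ) + 2 ≤ j := by
      exact_mod_cast not_lt.1 fun h => hj (Finset.mem_range.2 h)
    rw [partialSumLineWeight, max_eq_left (by linarith), min_eq_right zero_le_one]
  rw [← Finset.sum_subset (Finset.range_mono hN) fun j _ hj => by rw [hzero j hj, zero_mul],
    Finset.sum_range_succ, hfract, partialSumLine]
  exact congrArg (· + _) (Finset.sum_congr rfl fun j hj => by rw [hone j hj, one_mul])

lemma partialSumLine_const_one (x : ℝ) : partialSumLine (fun _ => 1) x = x + 1 := by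
  simp only [partialSumLine, Finset.sum_const, Finset.card_range, nsmul_eq_mul, mul_one,
    Nat.cast_add_one]
  ring

/-- The weights `partialSumLineWeight z j - partialSumLineWeight x j` are nonnegative for `x ≤ z`
and sum to `z - x`, the increment of the line of the constant sequence `1`. -/
lemma integral_sq_partialSumLine_sub_le {Ω : Type*} [MeasurableSpace Ω] {P : Measure Ω}
    {y : ℕ → Ω → ℝ} {B : ℝ} (hL2 : ∀ j, MemLp (y j) 2 P) (hB : ∀ j, ∫ ω, y j ω ^ 2 ∂P ≤ B)
    {x z : ℝ} (hx : 0 ≤ x) (hz : 0 ≤ z) :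
    ∫ ω, (partialSumLine (y · ω) z - partialSumLine (y · ω) x) ^ 2 ∂P ≤ (z - x) ^ 2 * B := by
  wlog hxz : x ≤ z generalizing x z
  · simp_rw [sub_sq_comm _ (partialSumLine _ x), sub_sq_comm z]
    exact this hz hx (le_of_not_ge hxz)
  have hdiff (u : ℕ → ℝ) : partialSumLine u z - partialSumLine u x =
      ∑ j ∈ Finset.range (⌊z⌋₊ + 2),
        (partialSumLineWeight z j - partialSumLineWeight x j) * u j := by
    rw [partialSumLine_eq_sum_weight_mul u hz le_rfl,
      partialSumLine_eq_sum_weight_mul u hx (Nat.add_le_add_right (Nat.floor_mono hxz) 2)]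
    simp_rw [sub_mul, Finset.sum_sub_distrib]
  have htotal := hdiff fun _ => 1
  simp only [partialSumLine_const_one, mul_one] at htotal
  simp_rw [hdiff]
  rw [show z - x = z + 1 - (x + 1) by ring, htotal]
  exact integral_sq_sum_mul_le hL2 hB _ fun j => sub_nonneg.2 (partialSumLineWeight_mono j hxz)

end PartialSumLine

section NearlyUnstable

variable {φ : ℕ → ℝ} {α : ℝ} {Ω : Type*} [MeasurableSpace Ω] {P : Measure Ω}

lemma memLp_and_integral_sq_of_autoregression {a : ℝ} (ha0 : 0 ≤ a) (ha1 : a < 1)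
    (hφ : IsSubprobSeq φ) (hφ0 : φ 0 = 0) {ε y : ℕ → Ω → ℝ} (hL2 : ∀ k, MemLp (ε k) 2 P)
    (hε : ∀ j k, ∫ ω, ε j ω * ε k ω ∂P = if j = k then 1 else 0) (hy0 : y 0 = ε 0)
    (hyrec : ∀ k, 1 ≤ k → ∀ ω,
      y k ω = ε k ω + ∑ i ∈ Finset.Icc 1 k, a * φ i * y (k - i) ω) (k : ℕ) :
    MemLp (y k) 2 P ∧
      ∫ ω, y k ω ^ 2 ∂P = ∑ j ∈ Finset.range (k + 1), psiSeq a φ j ^ 2 := by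
  have hy : y k = fun ω => ∑ j ∈ Finset.range (k + 1), psiSeq a φ (k - j) * ε j ω :=
    funext fun ω => eq_sum_psiSeq_mul_of_autoregression ha0 ha1 hφ hφ0 (congrFun hy0 ω)
      (fun m hm => hyrec m hm ω) k
  rw [hy]
  refine ⟨memLp_finsetSum _ fun j _ => (hL2 j).const_mul _, ?_⟩
  rw [integral_sq_sum_mul_of_orthonormal hL2 hε]
  exact Finset.sum_range_reflect (fun j => psiSeq a φ j ^ 2) (k + 1)

/-- With `b = 1 - a n`, the variance bound `b ^ (1 / α - 2)` of `y n` and the normalisation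
`b ^ 2 / n` combine to `n * b ^ (1 / α) = (n ^ α * b) ^ (1 / α)`. -/
theorem donsker_line_kolmogorov_heavy_tail_high_general
    (hφ : IsSubprobSeq φ) (hφ0 : φ 0 = 0) (hα : 1 / 2 < α)
    (htail : (fun N : ℕ => ∑' i, φ (N + i)) =Θ[atTop] fun N : ℕ => (N : ℝ) ^ (-α))
    {a : ℕ → ℝ} (ha : ∀ n, 1 ≤ n → 0 ≤ a n ∧ a n < 1)
    (hbdd : BddAbove (range fun n : ℕ => (n : ℝ) ^ α * (1 - a n)))
    {ε : ℕ → Ω → ℝ} (hL2 : ∀ k, MemLp (ε k) 2 P)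
    (hε : ∀ j k, ∫ ω, ε j ω * ε k ω ∂P = if j = k then 1 else 0)
    {y : ℕ → ℕ → Ω → ℝ} (hy0 : ∀ n, y n 0 = ε 0)
    (hyrec : ∀ n k, 1 ≤ k → ∀ ω,
      y n k ω = ε k ω + ∑ i ∈ Finset.Icc 1 k, a n * φ i * y n (k - i) ω)
    {Z : ℕ → ℝ → Ω → ℝ}
    (hZ : ∀ n t ω, Z n t ω = (1 - a n) / √n * partialSumLine (y n · ω) (n * t)) :
    ∃ c > 0, ∀ n, 1 ≤ n → ∀ s, 0 ≤ s → ∀ t, 0 ≤ t →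
      ∫ ω, |Z n t ω - Z n s ω| ^ 2 ∂P ≤ c * |t - s| ^ 2 := by
  obtain ⟨C, hC, hψ⟩ := exists_sum_psiSeq_sq_le hφ hα htail
  obtain ⟨M, hM1, hM⟩ := hbdd.exists_ge 1
  refine ⟨C * M ^ (1 / α), by positivity, fun n hn s hs t ht => ?_⟩
  obtain ⟨ha0, ha1⟩ := ha n hn
  have hα0 : 0 < α := by linarith
  have hn0 : (0 : ℝ) < n := Nat.cast_pos.2 hn
  have hb : 0 < 1 - a n := sub_pos.2 ha1
  have hy := memLp_and_integral_sq_of_autoregression ha0 ha1 hφ hφ0 hL2 hε (hy0 n) (hyrec n)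
  have hline := integral_sq_partialSumLine_sub_le (fun k => (hy k).1)
    (fun k => (hy k).2.trans_le (hψ _ ha0 ha1 (k + 1))) (mul_nonneg hn0.le hs)
    (mul_nonneg hn0.le ht)
  have hpow : (1 - a n) ^ 2 * (1 - a n) ^ (1 / α - 2) = (1 - a n) ^ (1 / α) := by
    rw [← Real.rpow_two, ← Real.rpow_add hb, add_sub_cancel]
  have hscale : n * (1 - a n) ^ (1 / α) = (n ^ α * (1 - a n)) ^ (1 / α) := by
    rw [Real.mul_rpow (by positivity) hb.le, ← Real.rpow_mul hn0.le, mul_one_div_cancel hα0.ne',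
      Real.rpow_one]
  simp_rw [hZ, ← mul_sub, sq_abs, mul_pow, div_pow, Real.sq_sqrt hn0.le]
  rw [integral_const_mul]
  calc (1 - a n) ^ 2 / n * ∫ ω, (partialSumLine (y n · ω) (n * t) -
        partialSumLine (y n · ω) (n * s)) ^ 2 ∂P
      ≤ (1 - a n) ^ 2 / n * ((n * t - n * s) ^ 2 * (C * (1 - a n) ^ (1 / α - 2))) := by gcongr
    _ = C * (n * ((1 - a n) ^ 2 * (1 - a n) ^ (1 / α - 2))) * (t - s) ^ 2 := by
        field_simp
    _ = C * (n ^ α * (1 - a n)) ^ (1 / α) * (t - s) ^ 2 := by rw [hpow, hscale]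
    _ ≤ C * M ^ (1 / α) * (t - s) ^ 2 := by
        gcongr
        exact hM _ (mem_range_self n)

end NearlyUnstable

lemma isTheta_rpow_neg_of_tendsto_rpow_mul {T : ℕ → ℝ} {K α : ℝ} (hK : K ≠ 0)
    (hT : Tendsto (fun N : ℕ => (N : ℝ) ^ α * T N) atTop (𝓝 K)) :
    T =Θ[atTop] fun N : ℕ => (N : ℝ) ^ (-α) := by
  refine (isTheta_of_div_tendsto_nhds_ne_zero (hT.congr fun N => ?_) hK).symm
  rw [Real.rpow_neg (Nat.cast_nonneg N), div_inv_eq_mul, mul_comm]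

lemma summable_of_tsum_ne_zero {f : ℕ → ℝ} (hf : ∑' i, f i ≠ 0) : Summable f := by
  by_contra hns
  exact hf (tsum_eq_zero_of_not_summable hns)

lemma integral_mul_eq_ite_of_iid {Ω : Type*} [MeasurableSpace Ω] {P : Measure Ω} {ε : ℕ → Ω → ℝ}
    (hindep : iIndepFun ε P) (hid : ∀ k, IdentDistrib (ε k) (ε 0) P P)
    (hmean : ∫ ω, ε 0 ω ∂P = 0) (hvar : ∫ ω, ε 0 ω ^ 2 ∂P = 1) (j k : ℕ) :
    ∫ ω, ε j ω * ε k ω ∂P = if j = k then 1 else 0 := by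
  split_ifs with hjk
  · simp_rw [hjk, ← sq]
    exact ((hid k).sq.integral_eq).trans hvar
  · rw [(hindep.indepFun hjk).integral_fun_mul_eq_mul_integral
      (hid j).aemeasurable_fst.aestronglyMeasurable (hid k).aemeasurable_fst.aestronglyMeasurable,
      (hid j).integral_eq, hmean, zero_mul]

/-- Kolmogorov moment bound for the Donsker line, heavy-tail case
`α > 1/2`: `E[|Z^n_t − Z^n_s|²] ≤ c |t−s|²`. -/
theorem donsker_line_kolmogorov_heavy_tail_high
    {Ω : Type*} [MeasurableSpace Ω] (P : Measure Ω) [IsProbabilityMeasure P]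
    (φ : ℕ → ℝ) (hφnn : ∀ i, 0 ≤ φ i) (hφ0 : φ 0 = 0) (hφsum : ∑' i : ℕ, φ i = 1)
    (K α : ℝ) (hK : 0 < K) (hα0 : 0 < α) (hα1 : α < 1)
    (htail : Tendsto (fun N : ℕ => (N : ℝ) ^ α * ∑' i : ℕ, φ (N + i)) atTop (nhds K))
    (δ : ℝ) (hδ : δ = K * Real.Gamma (1 - α) / α)
    (a : ℕ → ℝ) (ha : ∀ n, 1 ≤ n → 0 < a n ∧ a n < 1)
    (lam : ℝ) (hlam : 0 < lam)
    (haconv : Tendsto (fun n : ℕ => (n : ℝ) ^ α * (1 - a n)) atTop (nhds (lam * δ)))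
    -- the `ε_k` are iid, square integrable, centered with unit variance
    (ε : ℕ → Ω → ℝ) (hεmeas : ∀ k, Measurable (ε k))
    (hεindep : iIndepFun ε P)
    (hεid : ∀ k, Measure.map (ε k) P = Measure.map (ε 0) P)
    (hεL2 : MemLp (ε 0) 2 P)
    (hεmean : ∫ ω, ε 0 ω ∂P = 0)
    (hεvar : ∫ ω, (ε 0 ω) ^ 2 ∂P = 1)
    (y : ℕ → ℕ → Ω → ℝ)
    (hy0 : ∀ n, y n 0 = ε 0)
    (hyrec : ∀ n k, 1 ≤ k → ∀ ω,
      y n k ω = ε k ω + ∑ i ∈ Finset.Icc 1 k, a n * φ i * y n (k - i) ω)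
    -- the renormalized Donsker line
    (Z : ℕ → ℝ → Ω → ℝ)
    (hZ : ∀ n t ω, Z n t ω = (1 - a n) / Real.sqrt n *
      ((∑ j ∈ Finset.range (⌊(n : ℝ) * t⌋₊ + 1), y n j ω) +
        ((n : ℝ) * t - (⌊(n : ℝ) * t⌋₊ : ℝ)) * y n (⌊(n : ℝ) * t⌋₊ + 1) ω))
    (hαhalf : 1 / 2 < α) :
    ∃ c > 0, ∀ n, 1 ≤ n → ∀ s ∈ Set.Icc (0:ℝ) 1, ∀ t ∈ Set.Icc (0:ℝ) 1,
      ∫ ω, |Z n t ω - Z n s ω| ^ 2 ∂P ≤ c * |t - s| ^ 2 := by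
  have hid (k : ℕ) : IdentDistrib (ε k) (ε 0) P P :=
    ⟨(hεmeas k).aemeasurable, (hεmeas 0).aemeasurable, hεid k⟩
  have hφ : IsSubprobSeq φ :=
    ⟨hφnn, summable_of_tsum_ne_zero (hφsum.trans_ne one_ne_zero), hφsum.le⟩
  obtain ⟨c, hc, hbound⟩ := donsker_line_kolmogorov_heavy_tail_high_general hφ hφ0 hαhalf
    (isTheta_rpow_neg_of_tendsto_rpow_mul hK.ne' htail)
    (fun n hn => ⟨(ha n hn).1.le, (ha n hn).2⟩) haconv.bddAbove_range
    (fun k => (hid k).memLp_iff.2 hεL2) (integral_mul_eq_ite_of_iid hεindep hid hεmean hεvar)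
    hy0 hyrec hZ
  exact ⟨c, hc, fun n hn s hs t ht => hbound n hn s hs.1 t ht.1⟩
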